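/- In M_F, the connected component of the zero function 0̲, the path component of 0̲, and the quasi-component of 0̲ (the intersection of all subsets of M_F containing 0̲ that are both open and closed) all coincide, and are equal to ⋂_{G ∈ 𝒜_>} L^∞_G. -/

import Mathlib

open MeasureTheory Topology Set Pointwise

/-- The set of all real-valued measurable functions on `X`, as a subtype. -/
abbrev Mble (X : Type*) [MeasurableSpace X] : Type _ := {f : X → ℝ // Measurable f}

/-- The basic set `B(f, A, ε)`: all `g` such that for some measurable null set `N`,
`sup_{x ∈ A \ N} |f x - g x| < ε`. -/
def FBall {X : Type*} [MeasurableSpace X] (μ : Measure X) (f : Mble X) (A : Set X)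
    (ε : ℝ) : Set (Mble X) :=
  {g | ∃ N : Set X, MeasurableSet N ∧ μ N = 0 ∧
        ∃ b : ℝ, b < ε ∧ ∀ x ∈ A \ N, |f.1 x - g.1 x| ≤ b}

/-- The `F_μ`-topology on `Mble X`, generated by the sets `B(f, A, ε)` with
`A` measurable of finite measure and `ε > 0`. -/
def FTop {X : Type*} [MeasurableSpace X] (μ : Measure X) : TopologicalSpace (Mble X) :=
  TopologicalSpace.generateFrom
    {S | ∃ (f : Mble X) (A : Set X) (ε : ℝ),
        MeasurableSet A ∧ μ A < ⊤ ∧ 0 < ε ∧ S = FBall μ f A ε}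

/-- A `μ`-atom: a measurable set of positive measure admitting no decomposition into two
disjoint measurable pieces of positive measure. -/
def MuAtom {X : Type*} [MeasurableSpace X] (μ : Measure X) (A : Set X) : Prop :=
  MeasurableSet A ∧ 0 < μ A ∧
    ¬ ∃ B C : Set X, MeasurableSet B ∧ MeasurableSet C ∧ Disjoint B C ∧
        B ∪ C = A ∧ 0 < μ B ∧ 0 < μ C

/-- `G` is a union of finitely many `μ`-atoms. -/
def FinAtomUnion {X : Type*} [MeasurableSpace X] (μ : Measure X) (G : Set X) : Prop :=
  ∃ (n : ℕ) (F : Fin n → Set X), (∀ i, MuAtom μ (F i)) ∧ G = ⋃ i, F i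

/-- `L^∞_G`: the measurable functions that are essentially bounded on `G`. -/
def Linf {X : Type*} [MeasurableSpace X] (μ : Measure X) (G : Set X) : Set (Mble X) :=
  {f | ∃ M₀ : ℝ, 0 < M₀ ∧ ∃ N : Set X, MeasurableSet N ∧ μ N = 0 ∧
        ∀ x ∈ G \ N, |f.1 x| ≤ M₀}

/-- The intersection `⋂_{G ∈ 𝒜_>} L^∞_G`. -/
def InterLinf {X : Type*} [MeasurableSpace X] (μ : Measure X) : Set (Mble X) :=
  ⋂ G ∈ {A : Set X | MeasurableSet A ∧ 0 < μ A ∧ μ A < ⊤}, Linf μ G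

/-- The zero function as an element of `Mble X`. -/
def zeroM {X : Type*} [MeasurableSpace X] : Mble X := ⟨fun _ => 0, measurable_const⟩

/-- `μ` is hemifinite: some sequence in `𝒜_>` almost contains every member of `𝒜_>`. -/
def Hemifinite {X : Type*} [MeasurableSpace X] (μ : Measure X) : Prop :=
  ∃ A : ℕ → Set X, (∀ n, MeasurableSet (A n) ∧ 0 < μ (A n) ∧ μ (A n) < ⊤) ∧
    ∀ F : Set X, MeasurableSet F → 0 < μ F → μ F < ⊤ → ∃ n, μ (F \ A n) = 0

/-- `G⁺`: functions strictly positive μ-almost everywhere on `G`. -/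
def Gplus {X : Type*} [MeasurableSpace X] (μ : Measure X) (G : Set X) : Set (Mble X) :=
  {f | ∃ N : Set X, MeasurableSet N ∧ μ N = 0 ∧ ∀ x ∈ G \ N, 0 < f.1 x}

/-- `G⁰`: functions nonnegative μ-almost everywhere on `G`. -/
def Gzero {X : Type*} [MeasurableSpace X] (μ : Measure X) (G : Set X) : Set (Mble X) :=
  {f | ∃ N : Set X, MeasurableSet N ∧ μ N = 0 ∧ ∀ x ∈ G \ N, 0 ≤ f.1 x}

instance {X : Type*} [MeasurableSpace X] : Add (Mble X) :=
  ⟨fun f g => ⟨f.1 + g.1, f.2.add g.2⟩⟩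

/-!
On a set `A` of finite measure, being essentially bounded is unaffected by a perturbation that is
essentially bounded on `A`. Hence `L^∞_A` is both open and closed in `M_F`, and the
quasi-component of zero lies in `⋂ L^∞_A`. Conversely, if `f` is essentially bounded on every `A`
of finite measure, then `t • f` converges to `t₀ • f` uniformly almost everywhere on each such `A`
as `t → t₀`, so `t ↦ t • f` is a path from zero to `f`. Since path components lie in connected
components, and these in quasi-components, all three agree.
-/

open Filter

section ComponentsOfPoint

variable {Y : Type*} [TopologicalSpace Y] {y : Y} {C : Set Y}

theorem connectedComponent_subset_sInter_isOpen_isClosed :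
    connectedComponent y ⊆ ⋂₀ {S : Set Y | y ∈ S ∧ IsOpen S ∧ IsClosed S} :=
  subset_sInter fun _ ⟨hy, ho, hc⟩ => IsClopen.connectedComponent_subset ⟨hc, ho⟩ hy

theorem components_eq_of_subset_pathComponent_of_quasicomponent_subset
    (hpath : C ⊆ pathComponent y)
    (hquasi : ⋂₀ {S : Set Y | y ∈ S ∧ IsOpen S ∧ IsClosed S} ⊆ C) :
    connectedComponent y = C ∧ pathComponent y = C ∧
      ⋂₀ {S : Set Y | y ∈ S ∧ IsOpen S ∧ IsClosed S} = C := by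
  have hpc : pathComponent y ⊆ connectedComponent y := pathComponent_subset_component y
  have hcq := connectedComponent_subset_sInter_isOpen_isClosed (y := y)
  exact ⟨(hcq.trans hquasi).antisymm (hpath.trans hpc),
    (hpc.trans (hcq.trans hquasi)).antisymm hpath,
    hquasi.antisymm (hpath.trans (hpc.trans hcq))⟩

end ComponentsOfPoint

section UniformTopology

variable {X : Type*} [MeasurableSpace X] {μ : Measure X} {f g h : Mble X} {A : Set X} {δ ε : ℝ}

theorem exists_measurableSet_null_forall_mem_diff_iff {p : X → Prop} :
    (∃ N, MeasurableSet N ∧ μ N = 0 ∧ ∀ x ∈ A \ N, p x) ↔ ∀ᵐ x ∂μ, x ∈ A → p x := by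
  constructor
  · rintro ⟨N, -, hN, hp⟩
    filter_upwards [measure_eq_zero_iff_ae_notMem.1 hN] with x hxN hxA
    exact hp x ⟨hxA, hxN⟩
  · intro hp
    obtain ⟨N, hsub, hN, hN0⟩ := exists_measurable_superset_of_null (ae_iff.1 hp)
    exact ⟨N, hN, hN0, fun x hx => by_contra fun hpx => hx.2 (hsub fun hAp => hpx (hAp hx.1))⟩

theorem mem_FBall_iff :
    g ∈ FBall μ f A ε ↔ ∃ b < ε, ∀ᵐ x ∂μ, x ∈ A → |f.1 x - g.1 x| ≤ b := by
  simp only [← exists_measurableSet_null_forall_mem_diff_iff]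
  constructor
  · rintro ⟨N, hN, hN0, b, hb, hle⟩
    exact ⟨b, hb, N, hN, hN0, hle⟩
  · rintro ⟨b, hb, N, hN, hN0, hle⟩
    exact ⟨N, hN, hN0, b, hb, hle⟩

theorem mem_FBall_self (hε : 0 < ε) : f ∈ FBall μ f A ε :=
  mem_FBall_iff.2 ⟨0, hε, by simp⟩

theorem mem_FBall_comm : g ∈ FBall μ f A ε ↔ f ∈ FBall μ g A ε := by
  simp only [mem_FBall_iff, abs_sub_comm]

theorem mem_FBall_trans (hfg : g ∈ FBall μ f A δ) (hgh : h ∈ FBall μ g A ε) :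
    h ∈ FBall μ f A (δ + ε) := by
  obtain ⟨b, hb, hfg⟩ := mem_FBall_iff.1 hfg
  obtain ⟨c, hc, hgh⟩ := mem_FBall_iff.1 hgh
  refine mem_FBall_iff.2 ⟨b + c, add_lt_add hb hc, ?_⟩
  filter_upwards [hfg, hgh] with x hx hx' hxA
  exact (abs_sub_le _ _ _).trans (add_le_add (hx hxA) (hx' hxA))

theorem exists_mem_FBall_of_mem_FBall (hg : g ∈ FBall μ f A ε) :
    ∃ δ < ε, g ∈ FBall μ f A δ := by
  obtain ⟨b, hb, hle⟩ := mem_FBall_iff.1 hg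
  obtain ⟨δ, hbδ, hδε⟩ := exists_between hb
  exact ⟨δ, hδε, mem_FBall_iff.2 ⟨b, hbδ, hle⟩⟩

theorem exists_FBall_subset_FBall (hg : g ∈ FBall μ f A ε) :
    ∃ δ > 0, FBall μ g A δ ⊆ FBall μ f A ε := by
  obtain ⟨δ, hδε, hgδ⟩ := exists_mem_FBall_of_mem_FBall hg
  refine ⟨ε - δ, sub_pos.2 hδε, fun h hh => ?_⟩
  simpa only [add_sub_cancel] using mem_FBall_trans hgδ hh

theorem isOpen_FBall (hA : MeasurableSet A) (hfin : μ A < ⊤) (hε : 0 < ε) :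
    IsOpen[FTop μ] (FBall μ f A ε) :=
  TopologicalSpace.isOpen_generateFrom_of_mem ⟨f, A, ε, hA, hfin, hε, rfl⟩

theorem isOpen_of_forall_FBall_subset {S : Set (Mble X)} (hA : MeasurableSet A) (hfin : μ A < ⊤)
    (hε : 0 < ε) (hS : ∀ f ∈ S, FBall μ f A ε ⊆ S) : IsOpen[FTop μ] S := by
  let := FTop μ
  exact isOpen_iff_forall_mem_open.2 fun f hf =>
    ⟨FBall μ f A ε, hS f hf, isOpen_FBall hA hfin hε, mem_FBall_self hε⟩

theorem continuous_FTop_of_forall_eventually_mem_FBall {Y : Type*} [TopologicalSpace Y]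
    {u : Y → Mble X}
    (hu : ∀ A, MeasurableSet A → μ A < ⊤ → ∀ ε > 0, ∀ y, ∀ᶠ z in 𝓝 y, u z ∈ FBall μ (u y) A ε) :
    Continuous[_, FTop μ] u := by
  refine continuous_generateFrom_iff.2 ?_
  rintro _ ⟨f, A, ε, hA, hfin, -, rfl⟩
  refine isOpen_iff_mem_nhds.2 fun y hy => ?_
  obtain ⟨δ, hδ, hsub⟩ := exists_FBall_subset_FBall hy
  exact (hu A hA hfin δ hδ y).mono fun z hz => hsub hz

end UniformTopology

section EssentiallyBounded

variable {X : Type*} [MeasurableSpace X] {μ : Measure X} {f g : Mble X} {A : Set X} {ε : ℝ}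

theorem mem_Linf_iff : f ∈ Linf μ A ↔ ∃ M : ℝ, ∀ᵐ x ∂μ, x ∈ A → |f.1 x| ≤ M := by
  simp only [← exists_measurableSet_null_forall_mem_diff_iff]
  constructor
  · rintro ⟨M, -, hM⟩
    exact ⟨M, hM⟩
  · rintro ⟨M, N, hN, hN0, hM⟩
    exact ⟨max M 1, lt_max_of_lt_right one_pos, N, hN, hN0,
      fun x hx => (hM x hx).trans (le_max_left M 1)⟩

theorem zeroM_mem_Linf : zeroM ∈ Linf μ A :=
  mem_Linf_iff.2 ⟨0, by simp [zeroM]⟩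

theorem mem_Linf_of_measure_eq_zero (hA : μ A = 0) : f ∈ Linf μ A :=
  mem_Linf_iff.2 ⟨0, (measure_eq_zero_iff_ae_notMem.1 hA).mono fun _ hx hxA => absurd hxA hx⟩

theorem mem_Linf_of_mem_FBall (hf : f ∈ Linf μ A) (hg : g ∈ FBall μ f A ε) : g ∈ Linf μ A := by
  obtain ⟨M, hM⟩ := mem_Linf_iff.1 hf
  obtain ⟨b, -, hb⟩ := mem_FBall_iff.1 (mem_FBall_comm.1 hg)
  refine mem_Linf_iff.2 ⟨b + M, ?_⟩
  filter_upwards [hM, hb] with x hfx hgx hxA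
  calc |g.1 x| = |(g.1 x - f.1 x) + f.1 x| := by rw [sub_add_cancel]
    _ ≤ |g.1 x - f.1 x| + |f.1 x| := abs_add_le _ _
    _ ≤ b + M := add_le_add (hgx hxA) (hfx hxA)

theorem isOpen_Linf (hA : MeasurableSet A) (hfin : μ A < ⊤) : IsOpen[FTop μ] (Linf μ A) :=
  isOpen_of_forall_FBall_subset hA hfin one_pos fun _ hf _ hg => mem_Linf_of_mem_FBall hf hg

theorem isClosed_Linf (hA : MeasurableSet A) (hfin : μ A < ⊤) : IsClosed[FTop μ] (Linf μ A) := by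
  let := FTop μ
  exact isOpen_compl_iff.1 <| isOpen_of_forall_FBall_subset hA hfin one_pos
    fun _ hf _ hg hgA => hf (mem_Linf_of_mem_FBall hgA (mem_FBall_comm.1 hg))

theorem mem_InterLinf_iff :
    f ∈ InterLinf μ ↔ ∀ A, MeasurableSet A → μ A < ⊤ → f ∈ Linf μ A := by
  refine mem_iInter₂.trans ⟨fun hf A hA hfin => ?_, fun hf A hA => hf A hA.1 hA.2.2⟩
  rcases eq_zero_or_pos (μ A) with hA0 | hApos
  · exact mem_Linf_of_measure_eq_zero hA0
  · exact hf A ⟨hA, hApos, hfin⟩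

theorem quasicomponent_zeroM_subset_InterLinf :
    ⋂₀ {S : Set (Mble X) | zeroM ∈ S ∧ IsOpen[FTop μ] S ∧ IsClosed[FTop μ] S} ⊆ InterLinf μ :=
  fun _ hf => mem_InterLinf_iff.2 fun A hA hfin =>
    hf (Linf μ A) ⟨zeroM_mem_Linf, isOpen_Linf hA hfin, isClosed_Linf hA hfin⟩

end EssentiallyBounded

section ScalarPath

variable {X : Type*} [MeasurableSpace X] {μ : Measure X} {f : Mble X} {A : Set X}

/-- Pointwise multiplication of a measurable function by a real scalar; `t ↦ t • f` is the
segment joining zero to `f`. -/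
instance : SMul ℝ (Mble X) :=
  ⟨fun t f => ⟨fun x => t * f.1 x, f.2.const_mul t⟩⟩

theorem Mble.zero_smul : (0 : ℝ) • f = zeroM :=
  Subtype.ext <| funext fun x => zero_mul (f.1 x)

theorem Mble.one_smul : (1 : ℝ) • f = f :=
  Subtype.ext <| funext fun x => one_mul (f.1 x)

theorem eventually_smul_mem_FBall (hf : f ∈ Linf μ A) {ε : ℝ} (hε : 0 < ε) (t : ℝ) :
    ∀ᶠ s in 𝓝 t, s • f ∈ FBall μ (t • f) A ε := by
  obtain ⟨M, hM⟩ := mem_Linf_iff.1 hf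
  have hlim : Tendsto (fun s => |t - s| * M) (𝓝 t) (𝓝 0) :=
    Continuous.tendsto' (by fun_prop) t 0 (by simp)
  filter_upwards [hlim.eventually_lt_const hε] with s hs
  refine mem_FBall_iff.2 ⟨|t - s| * M, hs, ?_⟩
  filter_upwards [hM] with x hx hxA
  calc |t * f.1 x - s * f.1 x| = |t - s| * |f.1 x| := by rw [← sub_mul, abs_mul]
    _ ≤ |t - s| * M := mul_le_mul_of_nonneg_left (hx hxA) (abs_nonneg _)

theorem continuous_smul_of_mem_InterLinf (hf : f ∈ InterLinf μ) :
    Continuous[_, FTop μ] fun t : ℝ => t • f :=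
  continuous_FTop_of_forall_eventually_mem_FBall fun A hA hfin _ hε t =>
    eventually_smul_mem_FBall (mem_InterLinf_iff.1 hf A hA hfin) hε t

theorem InterLinf_subset_pathComponent_zeroM :
    InterLinf μ ⊆ @pathComponent (Mble X) (FTop μ) zeroM := by
  let := FTop μ
  intro f hf
  exact ⟨⟨⟨fun t => (t : ℝ) • f,
    (continuous_smul_of_mem_InterLinf hf).comp continuous_subtype_val⟩,
    Mble.zero_smul, Mble.one_smul⟩⟩

end ScalarPath

theorem stmt5_general {X : Type*} [MeasurableSpace X] (μ : Measure X) :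
    @connectedComponent (Mble X) (FTop μ) zeroM = InterLinf μ ∧
    @pathComponent (Mble X) (FTop μ) zeroM = InterLinf μ ∧
    ⋂₀ {S : Set (Mble X) | zeroM ∈ S ∧ IsOpen[FTop μ] S ∧ IsClosed[FTop μ] S} =
      InterLinf μ :=
  @components_eq_of_subset_pathComponent_of_quasicomponent_subset (Mble X) (FTop μ) _ _
    InterLinf_subset_pathComponent_zeroM quasicomponent_zeroM_subset_InterLinf

/-- In `M_F`, the connected component, the path component and the
quasi-component of the zero function coincide and equal `⋂_{G ∈ 𝒜_>} L^∞_G`. -/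
theorem stmt5 {X : Type*} [MeasurableSpace X] (μ : Measure X)
    (hpos : 0 < μ Set.univ)
    (hsub : ∀ A : Set X, MeasurableSet A → μ A = ⊤ →
      ∃ B, B ⊆ A ∧ MeasurableSet B ∧ 0 < μ B ∧ μ B < ⊤) :
    @connectedComponent (Mble X) (FTop μ) zeroM = InterLinf μ ∧
    @pathComponent (Mble X) (FTop μ) zeroM = InterLinf μ ∧
    ⋂₀ {S : Set (Mble X) | zeroM ∈ S ∧ IsOpen[FTop μ] S ∧ IsClosed[FTop μ] S} =
      InterLinf μ :=
  stmt5_general μ
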